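/- Let k ≥ 0 and let 1 ≤ i₁ ≤ i₂ ≤ … ≤ i_{k+1} ≤ m and ℓ ≥ j₁ ≥ j₂ ≥ … ≥ j_{k+1} ≥ m. Then for every permutation σ of {1,…,k+1}, the multiset of colors {(i_a, j_{σ(a)}) : a = 1,…,k+1} is greater than or equal to the multiset {(i_a, j_{k+2−a}) : a = 1,…,k+1} in the order on finite multisets of colors induced by the linear order on colors. In other words, among all multisets of k+1 colors whose multiset of row indices is {i₁,…,i_{k+1}} and whose multiset of column indices is {j₁,…,j_{k+1}}, the minimal one pairs i_a with j_{k+2−a}. -/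

import Mathlib

/-- The elements of a finite multiset over a linearly ordered set, listed in decreasing order. -/
def descList {X : Type*} [LinearOrder X] (M : Multiset X) : List X :=
  (M.sort (· ≤ ·)).reverse

/-- The order on finite multisets over a linearly ordered set: `M < N` iff, listing the
elements of each multiset in decreasing order, either at the first position where the two
lists differ the element of `M` is smaller than that of `N`, or the list of `M` is a proper
initial segment of the list of `N`. -/
def mlt {X : Type*} [LinearOrder X] (M N : Multiset X) : Prop :=
  List.Lex (· < ·) (descList M) (descList N)

/-- `M ≤ N` iff `M < N` or `M = N`. -/
def mle {X : Type*} [LinearOrder X] (M N : Multiset X) : Prop :=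
  mlt M N ∨ M = N

/-- A color is a pair `(i,j)` with `1 ≤ i ≤ m` and `m ≤ j ≤ ℓ`, linearly ordered by
`(i',j') < (i,j)` iff `i' > i`, or (`i' = i` and `j' < j`).  This order is realized by the
strictly monotone injection `colorKey (i,j) = (−i, j)` into `ℤ ×ₗ ℤ` (lexicographic order);
the first conjunct of the theorem below records this. -/
def colorKey (c : ℕ × ℕ) : ℤ ×ₗ ℤ := toLex (-(c.1 : ℤ), (c.2 : ℤ))

/-!
Two multisets compare as do the multiplicities of the largest element `c = (x, y)` at which these
differ. Every other pair of the quadrant `x ≤ x'`, `y ≤ y'` is larger than `c` and so has equal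
multiplicities, hence it suffices to compare the numbers of elements in this quadrant. The
half-planes `x ≤ x'` and `y ≤ y'` contain as many elements of one multiset as of the other, so by
inclusion-exclusion fewer elements in the union mean more in the quadrant. The union contains all
of an oppositely ordered multiset that has `c` as an element.
-/

section SortedLists

variable {X : Type*} [Preorder X] [DecidableEq X]

theorem count_cons_eq_zero_of_lt {a z : X} {l : List X} (h : (a :: l).SortedGE) (haz : a < z) :
    (a :: l).count z = 0 := by
  refine List.count_eq_zero_of_not_mem fun hz ↦ ?_
  rcases List.mem_cons.1 hz with rfl | hz
  · exact haz.false
  · exact haz.not_ge (List.rel_of_pairwise_cons h.pairwise hz)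

theorem exists_count_lt_of_lex {l₁ l₂ : List X} (h₁ : l₁.SortedGE) (h₂ : l₂.SortedGE)
    (h : List.Lex (· < ·) l₁ l₂) :
    ∃ y, l₁.count y < l₂.count y ∧ ∀ z, y < z → l₁.count z = l₂.count z := by
  induction h with
  | @nil b l =>
    refine ⟨b, by simp, fun z hz ↦ ?_⟩
    rw [List.count_nil, count_cons_eq_zero_of_lt h₂ hz]
  | @cons a l l' _ ih =>
    obtain ⟨y, hy, heq⟩ := ih h₁.pairwise.of_cons.sortedGE h₂.pairwise.of_cons.sortedGE
    exact ⟨y, by simpa [List.count_cons] using hy, fun z hz ↦ by simp [List.count_cons, heq z hz]⟩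
  | @rel a l b l' hab =>
    refine ⟨b, ?_, fun z hz ↦ ?_⟩
    · rw [count_cons_eq_zero_of_lt h₁ hab]
      simp
    · rw [count_cons_eq_zero_of_lt h₁ (hab.trans hz), count_cons_eq_zero_of_lt h₂ hz]

end SortedLists

section MultisetOrder

variable {X : Type*} [LinearOrder X]

theorem sortedGE_descList (M : Multiset X) : (descList M).SortedGE :=
  List.sortedGE_reverse.2 (M.pairwise_sort (· ≤ ·)).sortedLE

theorem coe_descList (M : Multiset X) : (descList M : Multiset X) = M := by
  rw [descList, Multiset.coe_reverse, Multiset.sort_eq]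

theorem descList_injective : Function.Injective (descList (X := X)) :=
  Function.LeftInverse.injective coe_descList

theorem count_descList (M : Multiset X) (x : X) : (descList M).count x = M.count x := by
  rw [← Multiset.coe_count, coe_descList]

theorem exists_count_lt_of_mlt {M N : Multiset X} (h : mlt M N) :
    ∃ y, M.count y < N.count y ∧ ∀ z, y < z → M.count z = N.count z := by
  simpa only [count_descList] using
    exists_count_lt_of_lex (sortedGE_descList M) (sortedGE_descList N) h

theorem mle_or_mlt (M N : Multiset X) : mle M N ∨ mlt N M := by
  rcases lt_trichotomy (descList M) (descList N) with h | h | h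
  · exact .inl (.inl h)
  · exact .inl (.inr (descList_injective h))
  · exact .inr h

theorem mle_of_forall_count_le {M N : Multiset X}
    (h : ∀ y ∈ M, (∀ z, y < z → M.count z = N.count z) → M.count y ≤ N.count y) : mle M N := by
  refine (mle_or_mlt M N).resolve_right fun hlt ↦ ?_
  obtain ⟨y, hy, heq⟩ := exists_count_lt_of_mlt hlt
  have hyM : y ∈ M := Multiset.count_pos.1 (Nat.zero_lt_of_lt hy)
  exact hy.not_ge (h y hyM fun z hz ↦ (heq z hz).symm)

end MultisetOrder

section Counting

variable {γ : Type*} (P Q : γ → Prop) [DecidablePred P] [DecidablePred Q]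

theorem countP_add_countP (M : Multiset γ) :
    M.countP P + M.countP Q =
      M.countP (fun c ↦ P c ∨ Q c) + M.countP (fun c ↦ P c ∧ Q c) := by
  simpa only [Multiset.card_add, ← Multiset.countP_eq_card_filter] using
    congrArg Multiset.card (Multiset.filter_add_filter P Q M)

variable {P Q}

theorem countP_and_le_countP_and {M N : Multiset γ} (hcard : N.card ≤ M.card)
    (hP : M.countP P ≤ N.countP P) (hQ : M.countP Q ≤ N.countP Q) (hM : ∀ c ∈ M, P c ∨ Q c) :
    M.countP (fun c ↦ P c ∧ Q c) ≤ N.countP (fun c ↦ P c ∧ Q c) := by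
  have hor_M : M.countP (fun c ↦ P c ∨ Q c) = M.card := Multiset.countP_eq_card.2 hM
  have hor_N : N.countP (fun c ↦ P c ∨ Q c) ≤ N.card := Multiset.countP_le_card _ _
  have hie_M := countP_add_countP P Q M
  have hie_N := countP_add_countP P Q N
  omega

theorem count_le_count_of_countP_le [DecidableEq γ] {M N : Multiset γ} {c : γ} (hc : P c)
    (hge : ∀ d, P d → d ≠ c → N.count d ≤ M.count d) (hle : M.countP P ≤ N.countP P) :
    M.count c ≤ N.count c := by
  by_contra! hlt
  have hfilter : N.filter P < M.filter P := by
    refine lt_of_le_of_ne (Multiset.le_iff_count.2 fun d ↦ ?_) fun h ↦ hlt.ne ?_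
    · by_cases hd : P d
      · rw [Multiset.count_filter_of_pos hd, Multiset.count_filter_of_pos hd]
        obtain rfl | hdc := eq_or_ne d c
        · exact hlt.le
        · exact hge d hd hdc
      · rw [Multiset.count_filter_of_neg hd, Multiset.count_filter_of_neg hd]
    · simpa only [Multiset.count_filter_of_pos hc] using congrArg (Multiset.count c) h
  rw [Multiset.countP_eq_card_filter, Multiset.countP_eq_card_filter] at hle
  exact (Multiset.card_lt_card hfilter).not_ge hle

theorem countP_comp_eq_of_map_eq {δ : Type*} {M N : Multiset γ} {f : γ → δ}
    (h : M.map f = N.map f) (R : δ → Prop) [DecidablePred R] :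
    M.countP (fun c ↦ R (f c)) = N.countP (fun c ↦ R (f c)) := by
  simp only [Multiset.countP_eq_card_filter, ← Multiset.countP_map, h]

theorem map_univ_comp_equiv {ι κ : Type*} [Fintype ι] [Fintype κ] (f : κ → γ) (e : ι ≃ κ) :
    (Finset.univ : Finset ι).val.map (fun a ↦ f (e a)) = (Finset.univ : Finset κ).val.map f := by
  rw [← Multiset.map_univ_val_equiv e, Multiset.map_map, Function.comp_def]

end Counting

section Pairing

theorem toLex_lt_of_le_of_ne {α β : Type*} [PartialOrder α] [PartialOrder β] {x : α} {y : β}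
    {d : α ×ₗ β} (hx : x ≤ (ofLex d).1) (hy : y ≤ (ofLex d).2) (hne : d ≠ toLex (x, y)) :
    toLex (x, y) < d :=
  lt_of_le_of_ne (Prod.Lex.toLex_mono (Prod.mk_le_mk.2 ⟨hx, hy⟩)) hne.symm

variable {α β : Type*} [LinearOrder α] [LinearOrder β]

theorem mle_of_map_fst_eq_of_map_snd_eq {M N : Multiset (α ×ₗ β)}
    (hfst : M.map (fun c ↦ (ofLex c).1) = N.map (fun c ↦ (ofLex c).1))
    (hsnd : M.map (fun c ↦ (ofLex c).2) = N.map (fun c ↦ (ofLex c).2))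
    (hM : ∀ c ∈ M, ∀ d ∈ M, (ofLex d).2 < (ofLex c).2 → (ofLex c).1 ≤ (ofLex d).1) :
    mle M N := by
  refine mle_of_forall_count_le fun c hc heq ↦ ?_
  have hcard : M.card = N.card := by
    simpa only [Multiset.card_map] using congrArg Multiset.card hfst
  have hunion : ∀ d ∈ M, (ofLex c).1 ≤ (ofLex d).1 ∨ (ofLex c).2 ≤ (ofLex d).2 :=
    fun d hd ↦ or_iff_not_imp_right.2 fun h ↦ hM c hc d hd (not_le.1 h)
  have hquadrant :
      M.countP (fun d ↦ (ofLex c).1 ≤ (ofLex d).1 ∧ (ofLex c).2 ≤ (ofLex d).2) ≤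
        N.countP (fun d ↦ (ofLex c).1 ≤ (ofLex d).1 ∧ (ofLex c).2 ≤ (ofLex d).2) :=
    countP_and_le_countP_and hcard.ge
      (countP_comp_eq_of_map_eq hfst ((ofLex c).1 ≤ ·)).le
      (countP_comp_eq_of_map_eq hsnd ((ofLex c).2 ≤ ·)).le hunion
  exact count_le_count_of_countP_le ⟨le_rfl, le_rfl⟩
    (fun d hd hne ↦ (heq d (toLex_lt_of_le_of_ne hd.1 hd.2 hne)).ge) hquadrant

theorem stmt15_general {ι : Type*} [Fintype ι] {r : ι → α} {s : ι → β} {τ : Equiv.Perm ι}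
    (h : Antivary r (s ∘ τ)) (σ : Equiv.Perm ι) :
    mle ((Finset.univ : Finset ι).val.map fun a ↦ toLex (r a, s (τ a)))
      ((Finset.univ : Finset ι).val.map fun a ↦ toLex (r a, s (σ a))) := by
  apply mle_of_map_fst_eq_of_map_snd_eq
  · simp only [Multiset.map_map, Function.comp_def, ofLex_toLex]
  · simp only [Multiset.map_map, Function.comp_def, ofLex_toLex, map_univ_comp_equiv]
  · simp only [Multiset.forall_mem_map_iff, ofLex_toLex]
    exact fun a _ b _ hlt ↦ h hlt

end Pairing

theorem colorKey_lt_colorKey_iff (c d : ℕ × ℕ) :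
    colorKey c < colorKey d ↔ d.1 < c.1 ∨ (c.1 = d.1 ∧ c.2 < d.2) := by
  simp only [colorKey, Prod.Lex.toLex_lt_toLex, neg_lt_neg_iff, neg_inj, Nat.cast_lt, Nat.cast_inj]

/-- let `k ≥ 0`, `1 ≤ i₁ ≤ … ≤ i_{k+1} ≤ m` and `ℓ ≥ j₁ ≥ … ≥ j_{k+1} ≥ m`
(encoded 0-based by monotone `i` and antitone `j` on `Fin (k+1)`).  For every permutation
`σ` of `{1, …, k+1}`, the multiset of colors `{(i_a, j_{σ(a)})}` is greater than or equal to
the multiset `{(i_a, j_{k+2−a})}` in the order on finite multisets of colors induced by the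
linear order on colors (0-based, `j_{k+2−a}` is `j` at the reversed index `Fin.rev a`). -/
theorem stmt15 (ℓ m k : ℕ) (hm : 1 ≤ m) (hml : m ≤ ℓ)
    (i j : Fin (k + 1) → ℕ)
    (hi : ∀ a, 1 ≤ i a ∧ i a ≤ m) (hj : ∀ a, m ≤ j a ∧ j a ≤ ℓ)
    (hmono : Monotone i) (hanti : Antitone j)
    (σ : Equiv.Perm (Fin (k + 1))) :
    (∀ c d : ℕ × ℕ, colorKey c < colorKey d ↔ (d.1 < c.1 ∨ (c.1 = d.1 ∧ c.2 < d.2))) ∧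
    mle (Multiset.map (fun a => colorKey (i a, j a.rev)) (Finset.univ : Finset (Fin (k + 1))).val)
        (Multiset.map (fun a => colorKey (i a, j (σ a))) (Finset.univ : Finset (Fin (k + 1))).val) := by
  have hr : Antitone fun a ↦ -(i a : ℤ) := (Nat.mono_cast.comp hmono).neg
  have hs : Monotone fun a : Fin (k + 1) ↦ (j a.rev : ℤ) :=
    Nat.mono_cast.comp (hanti.comp Fin.rev_anti)
  exact ⟨colorKey_lt_colorKey_iff,
    stmt15_general (s := fun a ↦ (j a : ℤ)) (τ := Fin.revPerm) (hr.antivary hs) σ⟩
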